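/- Assume (L,N) is graphically admissible. If Z₁ and Z₂ are minimal (respectively, minimum) sets satisfying the graphical adjustment criterion for A,Y,L,N in G, then the set Z₁ ∧ Z₂ := ∂_{H^1}(cc(Z₁∪Z₂, Y, H^1)) is also a minimal (respectively, minimum) set satisfying the criterion; moreover Z₁∧Z₂ ⊆ Z₁∪Z₂, Z₁∧Z₂ ⊴_{H^1} Z₁ and Z₁∧Z₂ ⊴_{H^1} Z₂. -/

import Mathlib

open Relation Set

namespace CausalGraph

variable {V : Type*} [Fintype V] [DecidableEq V]

/-- `p` is a path in the undirected sense from `u` to `v` along adjacency `Adj`: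
a nonempty list of pairwise distinct vertices, consecutive ones adjacent,
starting at `u` and ending at `v`. -/
def IsPath (Adj : V → V → Prop) (u v : V) (p : List V) : Prop :=
  List.Chain' Adj p ∧ p.head? = some u ∧ p.getLast? = some v ∧ p.Nodup

/-- Ancestors of `S` in the digraph `D` (every vertex is an ancestor of itself). -/
def anc (D : V → V → Prop) (S : Set V) : Set V :=
  {u | ∃ v ∈ S, Relation.ReflTransGen D u v}

/-- Descendants of `S` in the digraph `D` (every vertex is a descendant of itself). -/
def desc (D : V → V → Prop) (S : Set V) : Set V :=
  {u | ∃ v ∈ S, Relation.ReflTransGen D v u}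

/-- Parents of vertices of `S` in the digraph `D`. -/
def parents (D : V → V → Prop) (S : Set V) : Set V :=
  {u | ∃ v ∈ S, D u v}

/-- The digraph `D` is acyclic. -/
def Acyclic (D : V → V → Prop) : Prop :=
  ∀ u v, D u v → ¬ Relation.ReflTransGen D v u

/-- Vertices other than `A` lying on a directed path from `A` to `Y`. -/
def cn (D : V → V → Prop) (A Y : V) : Set V :=
  {v | v ≠ A ∧ Relation.ReflTransGen D A v ∧ Relation.ReflTransGen D v Y}

/-- The forbidden set. -/
def forb (D : V → V → Prop) (A Y : V) : Set V :=
  desc D (cn D A Y) ∪ {A}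

/-- Proper back-door graph: delete every edge from `A` into `cn D A Y`. -/
def pbd (D : V → V → Prop) (A Y : V) : V → V → Prop :=
  fun u v => D u v ∧ ¬(u = A ∧ v ∈ cn D A Y)

/-- `y` is an interior vertex of the list `p` with neighbours `x` and `z` on the path. -/
def InteriorAt (p : List V) (x y z : V) : Prop :=
  ∃ s t : List V, p = s ++ x :: y :: z :: t

/-- The path `p` is blocked by `Z` in the digraph `D`: some interior non-collider
lies in `Z`, or some interior collider has no descendant in `Z`. -/
def Blocked (D : V → V → Prop) (Z : Set V) (p : List V) : Prop :=
  (∃ x y z, InteriorAt p x y z ∧ ¬(D x y ∧ D z y) ∧ y ∈ Z) ∨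
  (∃ x y z, InteriorAt p x y z ∧ (D x y ∧ D z y) ∧ ∀ d ∈ desc D {y}, d ∉ Z)

/-- d-separation of `S` and `T` given `Z` in the digraph `D`. -/
def DSep (D : V → V → Prop) (S T Z : Set V) : Prop :=
  ∀ s ∈ S, ∀ t ∈ T, ∀ p : List V,
    IsPath (fun a b => D a b ∨ D b a) s t p → Blocked D Z p

/-- Moral graph of the subgraph of the digraph `D` induced on `Vs`. -/
def moral (D : V → V → Prop) (Vs : Set V) : SimpleGraph V :=
  SimpleGraph.fromRel (fun u v =>
    u ∈ Vs ∧ v ∈ Vs ∧ (D u v ∨ D v u ∨ ∃ w ∈ Vs, D u w ∧ D v w))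

/-- Separation in an undirected graph: every path from `S` to `T` meets `W`. -/
def USep (H : SimpleGraph V) (S T W : Set V) : Prop :=
  ∀ s ∈ S, ∀ t ∈ T, ∀ p : List V, IsPath H.Adj s t p → ∃ z ∈ W, z ∈ p

/-- `Z` is an `A`–`Y` cut in an undirected graph `H` with vertex set `Vs`. -/
def IsCut (Vs : Set V) (H : SimpleGraph V) (A Y : V) (Z : Set V) : Prop :=
  Z ⊆ Vs ∧ Z ∩ {A, Y} = ∅ ∧ ∀ p : List V, IsPath H.Adj A Y p → ∃ z ∈ Z, z ∈ p

def MinimalCut (Vs : Set V) (H : SimpleGraph V) (A Y : V) (Z : Set V) : Prop :=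
  IsCut Vs H A Y Z ∧ ∀ Z' ⊂ Z, ¬ IsCut Vs H A Y Z'

def MinimumCut (Vs : Set V) (H : SimpleGraph V) (A Y : V) (Z : Set V) : Prop :=
  IsCut Vs H A Y Z ∧ ∀ Z', IsCut Vs H A Y Z' → Z.ncard ≤ Z'.ncard

/-- Connected component of `y` in `H` restricted to the complement of `U`:
vertices reachable from `y` by paths avoiding `U`. -/
def cc (H : SimpleGraph V) (U : Set V) (y : V) : Set V :=
  {w | ∃ p : List V, IsPath H.Adj y w p ∧ ∀ x ∈ p, x ∉ U}

/-- Boundary of `S` in `H`: vertices outside `S` adjacent to some vertex of `S`. -/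
def bdry (H : SimpleGraph V) (S : Set V) : Set V :=
  {v | v ∉ S ∧ ∃ u ∈ S, H.Adj v u}

/-- The partial order `Z₁ ⊴_H Z₂` between `A`–`Y` cuts. -/
def TLE (H : SimpleGraph V) (A Y : V) (Z₁ Z₂ : Set V) : Prop :=
  USep H {Y} (Z₂ \ Z₁) Z₁ ∧ USep H {A} (Z₁ \ Z₂) Z₂

/-- Ancestors of `{A, Y} ∪ L`. -/
def ancAYL (D : V → V → Prop) (A Y : V) (L : Set V) : Set V :=
  anc D ({A, Y} ∪ L)

/-- The moral graph `H⁰` of the proper back-door graph induced on `an_G({A,Y} ∪ L)`. -/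
def H0 (D : V → V → Prop) (A Y : V) (L : Set V) : SimpleGraph V :=
  moral (pbd D A Y) (ancAYL D A Y L)

/-- The set of vertices removed from `H⁰` when constructing `H¹`. -/
def Ignore (D : V → V → Prop) (A Y : V) (L N : Set V) : Set V :=
  (ancAYL D A Y L \ {A, Y}) ∩ ((Set.univ \ N) ∪ forb D A Y)

/-- Vertex set of `H¹`. -/
def H1verts (D : V → V → Prop) (A Y : V) (L N : Set V) : Set V :=
  ancAYL D A Y L \ Ignore D A Y L N

/-- The non-parametric adjustment efficiency graph `H¹`: delete the vertices of
`Ignore`, join two remaining vertices if they are joined in `H⁰` by a path all of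
whose intermediate vertices are in `Ignore`, and join `A` and `Y` to every vertex
of `L`. -/
def H1 (D : V → V → Prop) (A Y : V) (L N : Set V) : SimpleGraph V :=
  SimpleGraph.fromRel (fun u v =>
    u ∈ H1verts D A Y L N ∧ v ∈ H1verts D A Y L N ∧
      ((∃ p : List V, IsPath (H0 D A Y L).Adj u v p ∧
          ∀ x ∈ p, x ≠ u → x ≠ v → x ∈ Ignore D A Y L N) ∨
        (u = A ∧ v ∈ L) ∨ (u = Y ∧ v ∈ L)))

/-- The graphical adjustment criterion for `A, Y, L, N` in the DAG `D`. -/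
def GAC (D : V → V → Prop) (A Y : V) (L N Z : Set V) : Prop :=
  DSep (pbd D A Y) {A} {Y} Z ∧ Z ∩ forb D A Y = ∅ ∧ L ⊆ Z ∧ Z ⊆ N

def MinimalGAC (D : V → V → Prop) (A Y : V) (L N Z : Set V) : Prop :=
  GAC D A Y L N Z ∧ ∀ Z' ⊂ Z, ¬ GAC D A Y L N Z'

def MinimumGAC (D : V → V → Prop) (A Y : V) (L N Z : Set V) : Prop :=
  GAC D A Y L N Z ∧ ∀ Z', GAC D A Y L N Z' → Z.ncard ≤ Z'.ncard

/-- Graphical admissibility of the pair `(L, N)`. -/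
def Admissible (D : V → V → Prop) (A Y : V) (L N : Set V) : Prop :=
  ∃ Z, GAC D A Y L N Z

end CausalGraph

namespace CausalGraph


section helpers
variable {V : Type*}

theorem path_of_rtg (R : V → V → Prop) (P : V → Prop) {u v : V} (hv : P v)
    (h : ReflTransGen (fun a b => R a b ∧ P a) u v) :
    ∃ p, IsPath R u v p ∧ ∀ x ∈ p, P x := by
  induction h using ReflTransGen.head_induction_on with
  | refl => exact ⟨[v], ⟨List.isChain_singleton v, by simp, by simp, by simp⟩, by simpa using hv⟩
  | head hab _ ih =>
    rename_i a b _
    obtain ⟨p, ⟨h1, h2, h3, h4⟩, h5⟩ := ih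
    by_cases ha : a ∈ p
    · obtain ⟨s, t, rfl⟩ := List.append_of_mem ha
      refine ⟨a :: t, ⟨?_, by simp, ?_, ?_⟩, ?_⟩
      · exact (List.isChain_append.1 h1).2.1
      · simpa using h3
      · exact (List.nodup_append.1 h4).2.1
      · intro x hx
        exact h5 x (by simp only [List.mem_append]; exact Or.inr hx)
    · refine ⟨a :: p, ⟨?_, by simp, ?_, by simp [ha, h4]⟩, ?_⟩
      · refine List.isChain_cons.2 ⟨?_, h1⟩
        intro y hy
        rw [h2] at hy
        simp at hy
        subst hy
        exact hab.1
      · rw [List.getLast?_cons, h3]; simp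
      · intro x hx
        rcases List.mem_cons.1 hx with rfl | hx
        · exact hab.2
        · exact h5 x hx

theorem rtg_of_path (R : V → V → Prop) (P : V → Prop) (p : List V) : ∀ {u v : V},
    IsPath R u v p → (∀ x ∈ p, P x) →
    P u ∧ P v ∧ ReflTransGen (fun a b => R a b ∧ P a ∧ P b) u v := by
  induction p with
  | nil => intro u v h; simp [IsPath] at h
  | cons a p ih =>
    intro u v ⟨h1, h2, h3, h4⟩ h5
    simp at h2
    subst h2
    cases p with
    | nil =>
      simp at h3
      subst h3
      exact ⟨h5 _ (by simp), h5 _ (by simp), .refl⟩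
    | cons b p =>
      have := @ih b v ⟨(List.isChain_cons.1 h1).2, by simp, by simpa using h3, (List.nodup_cons.1 h4).2⟩
        (fun x hx => h5 x (List.mem_cons_of_mem _ hx))
      refine ⟨h5 _ (by simp), this.2.1, .head ⟨?_, h5 _ (by simp), this.1⟩ this.2.2⟩
      exact (List.isChain_cons.1 h1).1 b (by simp)

/-- reachability within `P` -/
def Conn (R : V → V → Prop) (P : V → Prop) (u v : V) : Prop :=
  ReflTransGen (fun a b => R a b ∧ P a ∧ P b) u v

theorem path_of_conn {R : V → V → Prop} {P : V → Prop} {u v : V} (hv : P v)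
    (h : Conn R P u v) : ∃ p, IsPath R u v p ∧ ∀ x ∈ p, P x :=
  path_of_rtg R P hv (ReflTransGen.mono (r := fun a b => R a b ∧ P a ∧ P b) (fun _ _ h => ⟨h.1, h.2.1⟩) _ _ h)

theorem Conn.symm {H : SimpleGraph V} {P : V → Prop} {u v : V}
    (h : Conn H.Adj P u v) : Conn H.Adj P v u := by
  unfold Conn at *
  induction h with
  | refl => exact .refl
  | tail _ hbc ih => exact .head ⟨hbc.1.symm, hbc.2.2, hbc.2.1⟩ ih

theorem usep_iff (H : SimpleGraph V) (S T W : Set V) :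
    USep H S T W ↔ ∀ s ∈ S, ∀ t ∈ T, s ∉ W → t ∉ W → ¬ Conn H.Adj (· ∉ W) s t := by
  constructor
  · intro h s hs t ht hsw htw hc
    obtain ⟨p, hp, hx⟩ := path_of_conn (P := (· ∉ W)) htw hc
    obtain ⟨z, hz, hzp⟩ := h s hs t ht p hp
    exact hx z hzp hz
  · intro h s hs t ht p hp
    by_contra hcon
    push Not at hcon
    obtain ⟨h1, h2, h3⟩ := rtg_of_path H.Adj (· ∉ W) p hp (fun x hx hw => hcon x hw hx)
    exact h s hs t ht h1 h2 h3

theorem cut_iff (Vs : Set V) (H : SimpleGraph V) (A Y : V) (Z : Set V) :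
    IsCut Vs H A Y Z ↔ Z ⊆ Vs ∧ A ∉ Z ∧ Y ∉ Z ∧ ¬ Conn H.Adj (· ∉ Z) A Y := by
  have e : (∀ p : List V, IsPath H.Adj A Y p → ∃ z ∈ Z, z ∈ p) ↔ USep H {A} {Y} Z := by
    simp [USep]
  have e2 : Z ∩ {A, Y} = ∅ ↔ A ∉ Z ∧ Y ∉ Z := by
    rw [Set.eq_empty_iff_forall_notMem]
    constructor
    · intro h
      exact ⟨fun hA => h A ⟨hA, by simp⟩, fun hA => h Y ⟨hA, by simp⟩⟩
    · rintro ⟨h1, h2⟩ x ⟨hx, rfl | rfl⟩ <;> contradiction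
  unfold IsCut
  rw [e, e2, usep_iff]
  simp
  tauto

theorem mem_cc (H : SimpleGraph V) (U : Set V) (y w : V) :
    w ∈ cc H U y ↔ y ∉ U ∧ w ∉ U ∧ Conn H.Adj (· ∉ U) y w := by
  constructor
  · rintro ⟨p, hp, hx⟩
    exact rtg_of_path H.Adj (· ∉ U) p hp hx
  · rintro ⟨_, h1, h2⟩
    exact path_of_conn h1 h2

theorem Conn.mono {R : V → V → Prop} {P Q : V → Prop} (hPQ : ∀ x, P x → Q x) {u v : V}
    (h : Conn R P u v) : Conn R Q u v :=
  ReflTransGen.mono (r := fun a b => R a b ∧ P a ∧ P b) (fun _ _ h => ⟨h.1, hPQ _ h.2.1, hPQ _ h.2.2⟩) _ _ h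

/-- leaving `cc` means passing through the boundary -/
theorem conn_stay (H : SimpleGraph V) (C : Set V) {u v : V} (hu : u ∈ C)
    (h : Conn H.Adj (· ∉ bdry H C) u v) : v ∈ C := by
  induction h with
  | refl => exact hu
  | tail _ hbc ih =>
    by_contra hc
    exact hbc.2.2 ⟨hc, _, ih, hbc.1.symm⟩

theorem bdry_sub (H : SimpleGraph V) (U : Set V) (y : V) :
    bdry H (cc H U y) ⊆ U := by
  rintro v ⟨hv, u, hu, ha⟩
  by_contra hvU
  rw [mem_cc] at hu hv
  exact hv ⟨hu.1, hvU, hu.2.2.tail ⟨ha.symm, hu.2.1, hvU⟩⟩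

/-- a boundary vertex not in `Z` is connected to `y` off `Z ⊆ U` -/
theorem bdry_conn (H : SimpleGraph V) (U Z : Set V) (hZ : Z ⊆ U) (y v : V)
    (hv : v ∈ bdry H (cc H U y)) (hvZ : v ∉ Z) : Conn H.Adj (· ∉ Z) y v := by
  obtain ⟨hv, u, hu, ha⟩ := hv
  rw [mem_cc] at hu
  exact (hu.2.2.mono (fun x hx hz => hx (hZ hz))).tail ⟨ha.symm, fun h => hu.2.1 (hZ h), hvZ⟩

theorem bdry_cut {Vs : Set V} {H : SimpleGraph V} {A Y : V} {Z₁ Z₂ : Set V}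
    (h1 : IsCut Vs H A Y Z₁) (h2 : IsCut Vs H A Y Z₂) :
    IsCut Vs H A Y (bdry H (cc H (Z₁ ∪ Z₂) Y)) := by
  rw [cut_iff] at *
  have hs := bdry_sub H (Z₁ ∪ Z₂) Y
  have hU : Z₁ ∪ Z₂ ⊆ Vs := Set.union_subset h1.1 h2.1
  refine ⟨hs.trans hU, fun h => ?_, fun h => ?_, fun h => ?_⟩
  · rcases hs h with h | h
    · exact h1.2.1 h
    · exact h2.2.1 h
  · rcases hs h with h | h
    · exact h1.2.2.1 h
    · exact h2.2.2.1 h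
  · have hY : Y ∉ Z₁ ∪ Z₂ := by
      rintro (h | h)
      · exact h1.2.2.1 h
      · exact h2.2.2.1 h
    have := conn_stay H _ (by rw [mem_cc]; exact ⟨hY, hY, .refl⟩) h.symm
    rw [mem_cc] at this
    exact h1.2.2.2 (this.2.2.mono (fun x hx hz => hx (Or.inl hz))).symm

theorem cut_symm {Vs : Set V} {H : SimpleGraph V} {A Y : V} {Z : Set V} :
    IsCut Vs H A Y Z ↔ IsCut Vs H Y A Z := by
  rw [cut_iff, cut_iff]
  constructor <;> rintro ⟨a, b, c, d⟩ <;> exact ⟨a, c, b, fun h => d h.symm⟩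

/-- in a minimal cut, every vertex is adjacent to the `A` side -/
theorem minimal_adj {Vs : Set V} {H : SimpleGraph V} {A Y : V} {Z : Set V}
    (h : MinimalCut Vs H A Y Z) {z : V} (hz : z ∈ Z) :
    ∃ x, Conn H.Adj (· ∉ Z) A x ∧ x ∉ Z ∧ H.Adj x z := by
  have h2 := h.2 (Z \ {z}) ⟨Set.sdiff_subset, fun hh => (hh hz).2 rfl⟩
  obtain ⟨h1, -⟩ := h
  rw [cut_iff] at h1 h2
  by_contra hcon
  push Not at hcon
  refine h2 ⟨Set.sdiff_subset.trans h1.1, fun h => h1.2.1 h.1, fun h => h1.2.2.1 h.1, fun hc => ?_⟩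
  have key : ∀ v, Conn H.Adj (· ∉ Z \ {z}) A v → v ∉ Z ∧ Conn H.Adj (· ∉ Z) A v := by
    intro v hv
    induction hv with
    | refl => exact ⟨h1.2.1, .refl⟩
    | tail _ hbc ih =>
      rename_i b c _
      have hc : c ∉ Z := by
        intro hcZ
        by_cases hcz : c = z
        · subst hcz
          exact hcon b ih.2 ih.1 hbc.1
        · exact hbc.2.2 ⟨hcZ, hcz⟩
      exact ⟨hc, ih.2.tail ⟨hbc.1, ih.1, hc⟩⟩
  exact h1.2.2.2 (key Y hc).2

theorem bdry_tle {Vs : Set V} {H : SimpleGraph V} {A Y : V} {Z U : Set V} (hZ : Z ⊆ U)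
    (h1 : IsCut Vs H A Y Z) (hY : Y ∉ U) :
    TLE H A Y (bdry H (cc H U Y)) Z := by
  rw [cut_iff] at h1
  constructor
  · rw [usep_iff]
    rintro _ rfl t ⟨ht, -⟩ _ _ hc
    have := conn_stay H _ (by rw [mem_cc]; exact ⟨hY, hY, .refl⟩) hc
    rw [mem_cc] at this
    exact this.2.1 (hZ ht)
  · rw [usep_iff]
    rintro _ rfl t ⟨ht, htZ⟩ _ _ hc
    exact h1.2.2.2 (hc.trans (bdry_conn H U Z hZ Y t ht htZ).symm)

theorem bdry_minimal {Vs : Set V} {H : SimpleGraph V} {A Y : V} {Z₁ Z₂ : Set V}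
    (h1 : MinimalCut Vs H A Y Z₁) (h2 : MinimalCut Vs H A Y Z₂) :
    MinimalCut Vs H A Y (bdry H (cc H (Z₁ ∪ Z₂) Y)) := by
  refine ⟨bdry_cut h1.1 h2.1, ?_⟩
  intro Z' hZ' hcut
  obtain ⟨w, hw, hwZ'⟩ := Set.exists_of_ssubset hZ'
  have hs := bdry_sub H (Z₁ ∪ Z₂) Y
  have c1 := (cut_iff _ _ _ _ _).1 h1.1
  have c2 := (cut_iff _ _ _ _ _).1 h2.1
  rw [cut_iff] at hcut
  -- key
  have key : ∀ Z, Z ⊆ Z₁ ∪ Z₂ → MinimalCut Vs H A Y Z → w ∈ Z → False := by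
    intro Z hZU hZ hwZ
    have c := (cut_iff _ _ _ _ _).1 hZ.1
    obtain ⟨x, hx, hxZ, hxw⟩ := minimal_adj hZ hwZ
    have off : ∀ v, Conn H.Adj (· ∉ Z) A v → v ∉ Z → v ∉ bdry H (cc H (Z₁ ∪ Z₂) Y) :=
      fun v hv hvZ hb => c.2.2.2 (hv.trans (bdry_conn H _ Z hZU Y v hb hvZ).symm)
    have conv : ∀ v, Conn H.Adj (· ∉ Z) A v → Conn H.Adj (· ∉ Z') A v := by
      intro v hv
      induction hv with
      | refl => exact .refl
      | tail hb hbc ih =>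
        exact ih.tail ⟨hbc.1, fun h => off _ hb hbc.2.1 (hZ'.1 h),
          fun h => off _ (hb.tail hbc) hbc.2.2 (hZ'.1 h)⟩
    have hxZ' : x ∉ Z' := fun h => off x hx hxZ (hZ'.1 h)
    obtain ⟨hwC, u, hu, ha⟩ := hw
    have huC := hu
    rw [mem_cc] at hu
    have hcu : Conn H.Adj (· ∉ Z') Y u :=
      hu.2.2.mono (fun y hy hyz => hy (hs (hZ'.1 hyz)))
    have huZ' : u ∉ Z' := fun h => (hZ'.1 h).1 huC
    have : Conn H.Adj (· ∉ Z') A w := (conv x hx).tail ⟨hxw, hxZ', hwZ'⟩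
    exact hcut.2.2.2 ((this.tail ⟨ha, hwZ', huZ'⟩).trans hcu.symm)
  rcases hs hw with h | h
  · exact key Z₁ Set.subset_union_left h1 h
  · exact key Z₂ Set.subset_union_right h2 h

theorem bdry_minimum [Finite V] {Vs : Set V} {H : SimpleGraph V} {A Y : V} {Z₁ Z₂ : Set V}
    (h1 : MinimumCut Vs H A Y Z₁) (h2 : MinimumCut Vs H A Y Z₂) :
    MinimumCut Vs H A Y (bdry H (cc H (Z₁ ∪ Z₂) Y)) := by
  refine ⟨bdry_cut h1.1 h2.1, ?_⟩
  have hW' := cut_symm.1 (bdry_cut (cut_symm.1 h1.1) (cut_symm.1 h2.1))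
  have c1 := (cut_iff _ _ _ _ _).1 h1.1
  have c2 := (cut_iff _ _ _ _ _).1 h2.1
  set W := bdry H (cc H (Z₁ ∪ Z₂) Y) with hW
  set W' := bdry H (cc H (Z₁ ∪ Z₂) A) with hWW
  have hsub : W ∪ W' ⊆ Z₁ ∪ Z₂ := Set.union_subset (bdry_sub _ _ _) (bdry_sub _ _ _)
  have hint : W ∩ W' ⊆ Z₁ ∩ Z₂ := by
    rintro v ⟨ha, hb⟩
    constructor
    · by_contra hv
      exact c1.2.2.2 ((bdry_conn H _ Z₁ Set.subset_union_left A v hb hv).trans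
        (bdry_conn H _ Z₁ Set.subset_union_left Y v ha hv).symm)
    · by_contra hv
      exact c2.2.2.2 ((bdry_conn H _ Z₂ Set.subset_union_right A v hb hv).trans
        (bdry_conn H _ Z₂ Set.subset_union_right Y v ha hv).symm)
  have e1 := Set.ncard_union_add_ncard_inter W W'
  have e2 := Set.ncard_union_add_ncard_inter Z₁ Z₂
  have i1 := Set.ncard_le_ncard hsub (Set.toFinite _)
  have i2 := Set.ncard_le_ncard hint (Set.toFinite _)
  have i3 := h1.2 W' hW'
  have i4 := h2.2 W' hW'
  intro Z' hZ'
  have i5 := h1.2 Z' hZ'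
  have i6 := h2.2 Z' hZ'
  omega

/-! ### open walks -/

/-- open walk of length `n` -/
structure OW (E : V → V → Prop) (Z : Set V) (a v : V) (f : ℕ → V) (n : ℕ) : Prop where
  h0 : f 0 = a
  hn : f n = v
  adj : ∀ k < n, E (f k) (f (k+1)) ∨ E (f (k+1)) (f k)
  col : ∀ k, k + 2 ≤ n → E (f k) (f (k+1)) → E (f (k+2)) (f (k+1)) → f (k+1) ∈ anc E Z
  ncol : ∀ k, k + 2 ≤ n → ¬ (E (f k) (f (k+1)) ∧ E (f (k+2)) (f (k+1))) → f (k+1) ∉ Z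

theorem anc_step {E : V → V → Prop} {Z : Set V} {a b : V} (h : E a b) (hb : b ∈ anc E Z) :
    a ∈ anc E Z := by
  obtain ⟨z, hz, h'⟩ := hb
  exact ⟨z, hz, .head h h'⟩

/-- between two outgoing ends there is a collider -/
theorem seg_col {E : V → V → Prop} {Z : Set V} {a v : V} {f : ℕ → V} {n : ℕ}
    (hf : OW E Z a v f n) (j : ℕ) (hj : j + 1 ≤ n) (hlast : E (f (j+1)) (f j)) :
    ∀ d i, i + d = j → E (f i) (f (i+1)) → i < j → f i ∈ anc E Z := by
  intro d
  induction d with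
  | zero => intro i h1 _ h3; omega
  | succ d ih =>
    intro i h1 h2 h3
    refine anc_step h2 ?_
    by_cases hd : i + 1 = j
    · have := hf.col i (by omega) h2 (by subst hd; exact hlast)
      exact this
    · rcases hf.adj (i+1) (by omega) with h | h
      · exact ih (i+1) (by omega) h (by omega)
      · exact hf.col i (by omega) h2 h

theorem cut_walk {E : V → V → Prop} (hE : Acyclic E) {Z : Set V} {a v : V} {f : ℕ → V} {n : ℕ}
    (hf : OW E Z a v f n) {i j : ℕ} (hij : i < j) (hj : j ≤ n) (heq : f i = f j) :
    ∃ g, OW E Z a v g (n - (j - i)) := by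
  have irr : ∀ x y, E x y → ¬ E y x := fun x y h h' => hE x y h (.single h')
  refine ⟨fun k => if k ≤ i then f k else f (k + (j - i)), ?_⟩
  have g1 : ∀ k, k ≤ i → (fun k => if k ≤ i then f k else f (k + (j - i))) k = f k := by
    intro k hk; simp [hk]
  have g2 : ∀ k, i ≤ k → (fun k => if k ≤ i then f k else f (k + (j - i))) k
      = f (k + (j-i)) := by
    intro k hk
    by_cases h : k = i
    · subst h
      have : k + (j - k) = j := by omega
      simp [this, heq]
    · have : ¬ k ≤ i := by omega
      simp [this]
  generalize (fun k => if k ≤ i then f k else f (k + (j - i))) = g at g1 g2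
  -- junction facts
  have e0 : ∀ k, k + 1 = i → g k = f k ∧ g (k+1) = f i ∧ g (k+2) = f (j+1) := by
    intro k hk
    refine ⟨g1 _ (by omega), ?_, ?_⟩
    · rw [g1 _ (by omega), hk]
    · rw [g2 _ (by omega)]; congr 1; omega
  refine ⟨by rw [g1 _ (by omega), hf.h0], ?_, ?_, ?_, ?_⟩
  · rw [g2 _ (by omega), ← hf.hn]; congr 1; omega
  · intro k hk
    by_cases h : k + 1 ≤ i
    · rw [g1 _ h, g1 k (by omega)]; exact hf.adj k (by omega)
    · rw [g2 k (by omega), g2 (k+1) (by omega)]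
      have := hf.adj (k + (j - i)) (by omega)
      rwa [show k + (j - i) + 1 = k + 1 + (j - i) by omega] at this
  · intro k hk
    by_cases h : k + 2 ≤ i
    · rw [g1 _ h, g1 k (by omega), g1 (k+1) (by omega)]; exact hf.col k (by omega)
    · by_cases h' : i ≤ k
      · rw [g2 k (by omega), g2 (k+1) (by omega), g2 (k+2) (by omega)]
        have := hf.col (k + (j - i)) (by omega)
        rwa [show k + (j - i) + 1 = k + 1 + (j - i) by omega,
          show k + (j - i) + 2 = k + 2 + (j - i) by omega] at this
      · have hki : k + 1 = i := by omega
        obtain ⟨a1, a2, a3⟩ := e0 k hki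
        rw [a1, a2, a3]
        intro b1 b2
        subst hki
        rcases hf.adj (k+1) (by omega) with h3 | h3
        · exact seg_col hf j (by omega) (by rw [← heq]; exact b2) (j - (k+1)) (k+1) (by omega) h3 hij
        · exact hf.col k (by omega) b1 h3
  · intro k hk
    by_cases h : k + 2 ≤ i
    · rw [g1 _ h, g1 k (by omega), g1 (k+1) (by omega)]; exact hf.ncol k (by omega)
    · by_cases h' : i ≤ k
      · rw [g2 k (by omega), g2 (k+1) (by omega), g2 (k+2) (by omega)]
        have := hf.ncol (k + (j - i)) (by omega)
        rwa [show k + (j - i) + 1 = k + 1 + (j - i) by omega,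
          show k + (j - i) + 2 = k + 2 + (j - i) by omega] at this
      · have hki : k + 1 = i := by omega
        obtain ⟨a1, a2, a3⟩ := e0 k hki
        rw [a1, a2, a3]
        intro b
        by_cases b1 : E (f k) (f i)
        · have b2 : ¬ E (f (j+1)) (f j) := fun h => b ⟨b1, by rw [heq]; exact h⟩
          obtain ⟨l, rfl⟩ : ∃ l, j = l + 1 := ⟨j - 1, by omega⟩
          rw [heq]
          exact hf.ncol l (by omega) (fun h => b2 h.2)
        · subst hki
          exact hf.ncol k (by omega) (fun h => b1 h.1)

theorem inj_walk {E : V → V → Prop} (hE : Acyclic E) {Z : Set V} {a v : V} :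
    ∀ (n : ℕ) (f : ℕ → V), OW E Z a v f n →
    ∃ g m, OW E Z a v g m ∧ ∀ i j, i < j → j ≤ m → g i ≠ g j := by
  intro n
  induction n using Nat.strong_induction_on with
  | _ n ih =>
    intro f hf
    by_cases h : ∀ i j, i < j → j ≤ n → f i ≠ f j
    · exact ⟨f, n, hf, h⟩
    · push Not at h
      obtain ⟨i, j, hij, hj, heq⟩ := h
      obtain ⟨g, hg⟩ := cut_walk hE hf hij hj heq
      exact ih _ (by omega) g hg

theorem not_dsep_iff {E : V → V → Prop} (hE : Acyclic E) (Z : Set V) (a v : V) :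
    ¬ DSep E {a} {v} Z ↔ ∃ f n, OW E Z a v f n := by
  constructor
  · intro h
    simp only [DSep, Set.mem_singleton_iff] at h
    push Not at h
    obtain ⟨_, rfl, _, rfl, p, ⟨h1, h2, h3, h4⟩, hb⟩ := h
    rename_i s t
    have hlen : p ≠ [] := by rintro rfl; simp at h2
    have hl : 0 < p.length := List.length_pos_iff.2 hlen
    have hint : ∀ k (hk : k + 2 < p.length), InteriorAt p p[k] p[k+1] p[k+2] := by
      intro k hk
      refine ⟨p.take k, p.drop (k+3), ?_⟩
      rw [← List.drop_eq_getElem_cons, ← List.drop_eq_getElem_cons,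
        ← List.drop_eq_getElem_cons, List.take_append_drop]
    have hget : ∀ k (hk : k < p.length), p.getD k s = p[k] := by
      intro k hk; simp [hk]
    simp only [Blocked] at hb
    push Not at hb
    refine ⟨fun k => p.getD k s, p.length - 1, ?_, ?_, ?_, ?_, ?_⟩
    · cases p with
      | nil => simp at hl
      | cons a p => simpa using h2
    · simp only [List.getLast?_eq_getElem?] at h3
      simp [List.getD, h3]
    · intro k hk
      rw [hget k (by omega), hget (k+1) (by omega)]
      exact List.isChain_iff_getElem.1 h1 k (by omega)
    · intro k hk
      rw [hget k (by omega), hget (k+1) (by omega), hget (k+2) (by omega)]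
      intro c1 c2
      obtain ⟨d, ⟨x, rfl, hd⟩, hdZ⟩ := hb.2 _ _ _ (hint k (by omega)) ⟨c1, c2⟩
      exact ⟨d, hdZ, hd⟩
    · intro k hk
      rw [hget k (by omega), hget (k+1) (by omega), hget (k+2) (by omega)]
      intro c
      exact hb.1 _ _ _ (hint k (by omega)) (fun x y => c ⟨x, y⟩)
  · rintro ⟨f, n, hf⟩
    obtain ⟨g, m, hg, hinj⟩ := inj_walk hE n f hf
    intro hsep
    have hint : ∀ x y z, InteriorAt ((List.range (m+1)).map g) x y z →
        ∃ k, k + 2 ≤ m ∧ x = g k ∧ y = g (k+1) ∧ z = g (k+2) := by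
      rintro x y z ⟨s, t, hst⟩
      have hlen := congrArg List.length hst
      simp at hlen
      have a0 := congrArg (fun l => l[s.length]?) hst
      have a1 := congrArg (fun l => l[s.length+1]?) hst
      have a2 := congrArg (fun l => l[s.length+2]?) hst
      have l0 : s.length < m + 1 := by omega
      have l1 : s.length + 1 < m + 1 := by omega
      have l2 : s.length + 2 < m + 1 := by omega
      simp [List.getElem?_append, List.getElem?_range l0] at a0
      simp [List.getElem?_append, List.getElem?_range l1] at a1
      simp [List.getElem?_append, List.getElem?_range l2] at a2
      exact ⟨s.length, by omega, a0.symm, a1.symm, a2.symm⟩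
    have := hsep a rfl v rfl ((List.range (m+1)).map g) ⟨?_, ?_, ?_, ?_⟩
    · rcases this with ⟨x, y, z, hi, hc, hy⟩ | ⟨x, y, z, hi, hc, hy⟩
      · obtain ⟨k, hk, rfl, rfl, rfl⟩ := hint _ _ _ hi
        exact hg.ncol k hk hc hy
      · obtain ⟨k, hk, rfl, rfl, rfl⟩ := hint _ _ _ hi
        obtain ⟨d, hd, hd'⟩ := hg.col k hk hc.1 hc.2
        exact hy d ⟨_, rfl, hd'⟩ hd
    · apply List.isChain_iff_getElem.2
      intro k hk
      simp at hk ⊢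
      exact hg.adj k (by omega)
    · simp [List.range_succ_eq_map, hg.h0]
    · simp [List.range_succ, hg.hn]
    · refine List.Nodup.map_on ?_ List.nodup_range
      intro x hx y hy hxy
      simp at hx hy
      rcases lt_trichotomy x y with h | h | h
      · exact absurd hxy (hinj x y h (by omega))
      · exact h
      · exact absurd hxy.symm (hinj y x h (by omega))

theorem walk_in {E : V → V → Prop} {Z An : Set V} {a v : V} {f : ℕ → V} {n : ℕ}
    (hf : OW E Z a v f n) (hZ : Z ⊆ An) (ha : a ∈ An) (hv : v ∈ An)
    (hcl : ∀ x y, E x y → y ∈ An → x ∈ An) : ∀ k ≤ n, f k ∈ An := by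
  have hanc : ∀ x, x ∈ anc E Z → x ∈ An := by
    rintro x ⟨z, hz, h⟩
    induction h using ReflTransGen.head_induction_on with
    | refl => exact hZ hz
    | head h _ ih => exact hcl _ _ h ih
  have fwd : ∀ d k, k + d + 1 = n → E (f k) (f (k+1)) → f k ∈ An := by
    intro d
    induction d with
    | zero => intro k hk h; exact hcl _ _ h (by rw [show k + 1 = n by omega, hf.hn]; exact hv)
    | succ d ih =>
      intro k hk h
      refine hcl _ _ h ?_
      rcases hf.adj (k+1) (by omega) with h' | h'
      · exact ih (k+1) (by omega) h'
      · exact hanc _ (hf.col k (by omega) h h')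
  have bwd : ∀ k, k + 1 ≤ n → E (f (k+1)) (f k) → f (k+1) ∈ An := by
    intro k
    induction k with
    | zero => intro hk h; exact hcl _ _ h (by rw [hf.h0]; exact ha)
    | succ k ih =>
      intro hk h
      refine hcl _ _ h ?_
      rcases hf.adj k (by omega) with h' | h'
      · exact hanc _ (hf.col k (by omega) h' h)
      · exact ih (by omega) h'
  intro k hk
  rcases Nat.eq_or_lt_of_le hk with rfl | hk
  · rw [hf.hn]; exact hv
  cases k with
  | zero => rw [hf.h0]; exact ha
  | succ k =>
    rcases hf.adj (k+1) hk with h | h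
    · exact fwd (n - (k+1) - 1) (k+1) (by omega) h
    · rcases hf.adj k (by omega) with h' | h'
      · exact hanc _ (hf.col k (by omega) h' h)
      · exact bwd k (by omega) h'

theorem moral_adj {E : V → V → Prop} {Vs : Set V} {u v : V} :
    (moral E Vs).Adj u v ↔ u ≠ v ∧ u ∈ Vs ∧ v ∈ Vs ∧ (E u v ∨ E v u ∨ ∃ w ∈ Vs, E u w ∧ E v w) := by
  simp only [moral, SimpleGraph.fromRel_adj]
  constructor
  · rintro ⟨h, ⟨a, b, c⟩ | ⟨a, b, c⟩⟩
    · exact ⟨h, a, b, c⟩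
    · refine ⟨h, b, a, ?_⟩
      rcases c with c | c | ⟨w, hw, c, d⟩
      · exact Or.inr (Or.inl c)
      · exact Or.inl c
      · exact Or.inr (Or.inr ⟨w, hw, d, c⟩)
  · rintro ⟨h, r⟩
    exact ⟨h, Or.inl r⟩

theorem moral_of_walk {E : V → V → Prop} (hE : Acyclic E) {Z An : Set V} {a v : V} {f : ℕ → V}
    {n : ℕ} (hf : OW E Z a v f n) (hZ : Z ⊆ An) (ha : a ∈ An) (hv : v ∈ An)
    (haZ : a ∉ Z) (hvZ : v ∉ Z) (hcl : ∀ x y, E x y → y ∈ An → x ∈ An) :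
    Conn (moral E An).Adj (· ∉ Z) a v := by
  have irr : ∀ x y, E x y → ¬ E y x := fun x y h h' => hE x y h (.single h')
  have hin := walk_in hf hZ ha hv hcl
  have key : ∀ k ≤ n, f k ∉ Z → Conn (moral E An).Adj (· ∉ Z) a (f k) := by
    intro k
    induction k using Nat.strong_induction_on with
    | _ k ih =>
      intro hk hkZ
      cases k with
      | zero => rw [hf.h0]; exact .refl
      | succ k =>
        by_cases hz : f k ∈ Z
        · cases k with
          | zero => rw [hf.h0] at hz; exact absurd hz haZ
          | succ k =>
            have hc : E (f k) (f (k+1)) ∧ E (f (k+2)) (f (k+1)) := by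
              by_contra hc
              exact hf.ncol k hk hc hz
            have hkZ' : f k ∉ Z := by
              cases k with
              | zero => rw [hf.h0]; exact haZ
              | succ k =>
                exact hf.ncol k (by omega) (fun h => irr _ _ hc.1 h.2)
            have := ih k (by omega) (by omega) hkZ'
            by_cases e : f k = f (k+2)
            · rw [e] at this; exact this
            · refine this.tail ⟨moral_adj.2 ⟨e, hin k (by omega), hin _ hk,
                Or.inr (Or.inr ⟨_, hin (k+1) (by omega), hc.1, hc.2⟩)⟩, hkZ', hkZ⟩
        · refine (ih k (by omega) (by omega) hz).tail ⟨moral_adj.2 ⟨?_, hin k (by omega), hin _ hk, ?_⟩, hz, hkZ⟩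
          · intro e
            rcases hf.adj k hk with h | h
            · rw [← e] at h; exact irr _ _ h h
            · rw [← e] at h; exact irr _ _ h h
          · rcases hf.adj k hk with h | h
            · exact Or.inl h
            · exact Or.inr (Or.inl h)
  have := key n le_rfl (by rw [hf.hn]; exact hvZ)
  rwa [hf.hn] at this

/-- open walk with last edge into the endpoint -/
def BIn (E : V → V → Prop) (Z : Set V) (a v : V) : Prop :=
  ∃ f n, OW E Z a v f (n+1) ∧ E (f n) v

/-- open walk, trivial or with last edge out of the endpoint -/
def BOut (E : V → V → Prop) (Z : Set V) (a v : V) : Prop :=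
  ∃ f n, OW E Z a v f n ∧ ∀ m, n = m + 1 → E v (f m)

theorem ow_ext {E : V → V → Prop} {Z : Set V} {a v c : V} {f : ℕ → V} {n : ℕ}
    (hf : OW E Z a v f n) (hadj : E v c ∨ E c v)
    (h1 : ∀ m, n = m + 1 → E (f m) v → E c v → v ∈ anc E Z)
    (h2 : ∀ m, n = m + 1 → ¬ (E (f m) v ∧ E c v) → v ∉ Z) :
    ∃ g, OW E Z a c g (n+1) ∧ g n = v := by
  refine ⟨fun k => if k ≤ n then f k else c, ?_, by simp [hf.hn]⟩
  have g1 : ∀ k, k ≤ n → (fun k => if k ≤ n then f k else c) k = f k := by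
    intro k hk; simp [hk]
  have g2 : (fun k => if k ≤ n then f k else c) (n+1) = c := by simp
  generalize (fun k => if k ≤ n then f k else c) = g at g1 g2
  refine ⟨by rw [g1 _ (by omega), hf.h0], g2, ?_, ?_, ?_⟩
  · intro k hk
    by_cases h : k = n
    · subst h; rw [g2, g1 _ le_rfl, hf.hn]; exact hadj
    · rw [g1 k (by omega), g1 (k+1) (by omega)]; exact hf.adj k (by omega)
  · intro k hk
    by_cases h : k + 1 = n
    · subst h; rw [g2, g1 _ le_rfl, g1 _ (by omega), hf.hn]; exact h1 k rfl
    · rw [g1 k (by omega), g1 (k+1) (by omega), g1 (k+2) (by omega)]; exact hf.col k (by omega)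
  · intro k hk
    by_cases h : k + 1 = n
    · subst h; rw [g2, g1 _ le_rfl, g1 _ (by omega), hf.hn]; exact h2 k rfl
    · rw [g1 k (by omega), g1 (k+1) (by omega), g1 (k+2) (by omega)]; exact hf.ncol k (by omega)

section ball
variable {E : V → V → Prop} {Z : Set V} {a : V}

theorem ball_down (hE : Acyclic E) {v c : V} (h : BIn E Z a v ∨ BOut E Z a v) (hv : v ∉ Z) (hc : E v c) :
    BIn E Z a c := by
  have irr : ∀ x y, E x y → ¬ E y x := fun x y h h' => hE x y h (.single h')
  obtain ⟨f, n, hf⟩ : ∃ f n, OW E Z a v f n := by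
    rcases h with ⟨f, n, hf, -⟩ | ⟨f, n, hf, -⟩
    · exact ⟨f, _, hf⟩
    · exact ⟨f, _, hf⟩
  obtain ⟨g, hg, e⟩ := ow_ext hf (Or.inl hc) (fun m _ _ h => absurd h (irr _ _ hc))
    (fun _ _ _ => hv)
  exact ⟨g, n, hg, by rw [e]; exact hc⟩

theorem ball_up (hE : Acyclic E) {v c : V} (h : BOut E Z a v) (hv : v ∉ Z) (hc : E c v) :
    BOut E Z a c := by
  have irr : ∀ x y, E x y → ¬ E y x := fun x y h h' => hE x y h (.single h')
  obtain ⟨f, n, hf, h⟩ := h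
  obtain ⟨g, hg, e⟩ := ow_ext hf (Or.inr hc) (fun m hm h' _ => absurd h' (irr _ _ (h m hm)))
    (fun _ _ _ => hv)
  refine ⟨g, n+1, hg, ?_⟩
  intro m hm
  obtain rfl : n = m := by omega
  rw [e]; exact hc

theorem ball_col {v c : V} (h : BIn E Z a v) (hv : v ∈ anc E Z) (hc : E c v) :
    BOut E Z a c := by
  obtain ⟨f, n, hf, h⟩ := h
  obtain ⟨g, hg, e⟩ := ow_ext hf (Or.inr hc) (fun m hm _ _ => hv)
    (fun m hm h' => by
      obtain rfl : n = m := by omega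
      exact absurd ⟨h, hc⟩ h')
  refine ⟨g, n+2, hg, ?_⟩
  intro m hm
  obtain rfl : n + 1 = m := by omega
  rw [e]; exact hc

theorem ball_desc (hE : Acyclic E) {v t : V} (hvt : ReflTransGen E v t) (h : BIn E Z a v ∨ BOut E Z a v)
    (hv : v ∉ anc E Z) : BIn E Z a t ∨ BOut E Z a t := by
  induction hvt using ReflTransGen.head_induction_on with
  | refl => exact h
  | head hxy _ ih =>
    rename_i x y _
    exact ih (Or.inl (ball_down hE h (fun hz => hv ⟨x, hz, .refl⟩) hxy))
      (fun h => hv (anc_step hxy h))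

theorem ball_anc (hE : Acyclic E) {v : V} (hva : ReflTransGen E v a) (hv : v ∉ anc E Z) : BOut E Z a v := by
  induction hva using ReflTransGen.head_induction_on with
  | refl => exact ⟨fun _ => a, 0, ⟨rfl, rfl, by simp, by simp, by simp⟩, by simp⟩
  | head hxy _ ih =>
    rename_i x y _
    have hy : y ∉ anc E Z := fun h => hv (anc_step hxy h)
    exact ball_up hE (ih hy) (fun hz => hy ⟨_, hz, .refl⟩) hxy

theorem walk_of_moral (hE : Acyclic E) {An : Set V} {y v : V}
    (hAn : ∀ x ∈ An, ∃ t, (t = a ∨ t = y ∨ t ∈ Z) ∧ ReflTransGen E x t)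
    (h : Conn (moral E An).Adj (· ∉ Z) a v) :
    (BIn E Z a y ∨ BOut E Z a y) ∨ (BIn E Z a v ∨ BOut E Z a v) := by
  have key : ∀ w c, w ∈ An → (BIn E Z a w) → E c w →
      (BIn E Z a y ∨ BOut E Z a y) ∨ BOut E Z a c := by
    intro w c hw hb hc
    by_cases hwz : w ∈ anc E Z
    · exact Or.inr (ball_col hb hwz hc)
    · obtain ⟨t, rfl | rfl | ht, hwt⟩ := hAn w hw
      · exact Or.inr (ball_up hE (ball_anc hE hwt hwz) (fun h => hwz ⟨w, h, .refl⟩) hc)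
      · exact Or.inl (ball_desc hE hwt (Or.inl hb) hwz)
      · exact absurd ⟨t, ht, hwt⟩ hwz
  induction h with
  | refl => exact Or.inr (Or.inr ⟨fun _ => a, 0, ⟨rfl, rfl, by simp, by simp, by simp⟩, by simp⟩)
  | tail _ hbc ih =>
    rename_i b c _
    obtain ⟨hadj, hb, hc⟩ := hbc
    rw [moral_adj] at hadj
    obtain ⟨-, hbA, hcA, hadj⟩ := hadj
    rcases ih with ih | ih
    · exact Or.inl ih
    rcases hadj with h | h | ⟨w, hw, h1, h2⟩
    · exact Or.inr (Or.inl (ball_down hE ih hb h))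
    · rcases ih with ih | ih
      · rcases key b c hbA ih h with h | h
        · exact Or.inl h
        · exact Or.inr (Or.inr h)
      · exact Or.inr (Or.inr (ball_up hE ih hb h))
    · rcases key w c hw (ball_down hE ih hb h1) h2 with h | h
      · exact Or.inl h
      · exact Or.inr (Or.inr h)

theorem dsep_iff_moral (hE : Acyclic E) {An : Set V} {y : V} (hZ : Z ⊆ An) (ha : a ∈ An) (hy : y ∈ An)
    (haZ : a ∉ Z) (hyZ : y ∉ Z) (hcl : ∀ x y, E x y → y ∈ An → x ∈ An)
    (hAn : ∀ x ∈ An, ∃ t, (t = a ∨ t = y ∨ t ∈ Z) ∧ ReflTransGen E x t) :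
    DSep E {a} {y} Z ↔ ¬ Conn (moral E An).Adj (· ∉ Z) a y := by
  rw [← not_iff_not, not_dsep_iff hE, not_not]
  constructor
  · rintro ⟨f, n, hf⟩
    exact moral_of_walk hE hf hZ ha hy haZ hyZ hcl
  · intro h
    have : BIn E Z a y ∨ BOut E Z a y := by
      rcases walk_of_moral hE hAn h with h | h <;> exact h
    rcases this with ⟨f, n, hf, -⟩ | ⟨f, n, hf, -⟩
    · exact ⟨f, _, hf⟩
    · exact ⟨f, _, hf⟩

end ball

/-! ### the specific graphs -/

section spec
variable {D : V → V → Prop} {A Y : V} {L N : Set V}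

theorem pbd_acyclic (hD : Acyclic D) : Acyclic (pbd D A Y) := fun u v h h' =>
  hD u v h.1 (ReflTransGen.mono (r := pbd D A Y) (fun _ _ h => h.1) _ _ h')

theorem an_closed : ∀ x y, pbd D A Y x y → y ∈ ancAYL D A Y L → x ∈ ancAYL D A Y L :=
  fun _ _ h hy => anc_step h.1 hy

theorem an_pbd : ∀ x ∈ ancAYL D A Y L, ∃ t, (t = A ∨ t = Y ∨ t ∈ L) ∧
    ReflTransGen (pbd D A Y) x t := by
  rintro x ⟨t, ht, h⟩
  induction h using ReflTransGen.head_induction_on with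
  | refl =>
    refine ⟨t, ?_, .refl⟩
    rcases ht with (h | h) | h
    · exact Or.inl h
    · exact Or.inr (Or.inl h)
    · exact Or.inr (Or.inr h)
  | head hxy _ ih =>
    rename_i x y _
    by_cases hc : x = A ∧ y ∈ cn D A Y
    · exact ⟨A, Or.inl rfl, by rw [hc.1]⟩
    · obtain ⟨t', ht', h'⟩ := ih
      exact ⟨t', ht', .head ⟨hxy, hc⟩ h'⟩

theorem A_mem : A ∈ ancAYL D A Y L := ⟨A, by simp, .refl⟩
theorem Y_mem : Y ∈ ancAYL D A Y L := ⟨Y, by simp, .refl⟩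
theorem L_sub : L ⊆ ancAYL D A Y L := fun x hx => ⟨x, by simp [hx], .refl⟩

theorem A_forb : A ∈ forb D A Y := Or.inr rfl
theorem Y_forb (hAY : A ≠ Y) (h : ReflTransGen D A Y) : Y ∈ forb D A Y :=
  Or.inl ⟨Y, ⟨hAY.symm, h, .refl⟩, .refl⟩

theorem gac_inter (hD : Acyclic D) {Z : Set V} (h : GAC D A Y L N Z) :
    GAC D A Y L N (Z ∩ ancAYL D A Y L) := by
  obtain ⟨h1, h2, h3, h4⟩ := h
  refine ⟨?_, ?_, fun x hx => ⟨h3 hx, L_sub hx⟩, fun x hx => h4 hx.1⟩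
  · by_contra hc
    rw [not_dsep_iff (pbd_acyclic hD)] at hc
    obtain ⟨f, n, hf⟩ := hc
    refine (not_dsep_iff (pbd_acyclic hD) Z A Y).2 ⟨f, n, hf.h0, hf.hn, hf.adj, ?_, ?_⟩ h1
    · intro k hk c1 c2
      obtain ⟨z, hz, h⟩ := hf.col k hk c1 c2
      exact ⟨z, hz.1, h⟩
    · intro k hk c hz
      exact hf.ncol k hk c ⟨hz, walk_in hf Set.inter_subset_right A_mem Y_mem an_closed _ (by omega)⟩
  · rw [Set.eq_empty_iff_forall_notMem] at *
    exact fun x hx => h2 x ⟨hx.1.1, hx.2⟩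

theorem conn_ignore {Z : Set V} {u v : V} {I : Set V} (hI : ∀ x ∈ I, x ∉ Z) (hu : u ∉ Z) (hv : v ∉ Z)
    {H : SimpleGraph V} {p : List V} (hp : IsPath H.Adj u v p)
    (hx : ∀ x ∈ p, x ≠ u → x ≠ v → x ∈ I) : Conn H.Adj (· ∉ Z) u v := by
  refine (rtg_of_path H.Adj (· ∉ Z) p hp ?_).2.2
  intro x hxp
  by_cases h1 : x = u
  · rw [h1]; exact hu
  by_cases h2 : x = v
  · rw [h2]; exact hv
  exact hI x (hx x hxp h1 h2)

theorem H1_conn_iff {Z : Set V} (hZ : Z ⊆ H1verts D A Y L N)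
    (hA : A ∉ Z) (hLZ : L ⊆ Z) :
    Conn (H1 D A Y L N).Adj (· ∉ Z) A Y ↔ Conn (H0 D A Y L).Adj (· ∉ Z) A Y := by
  have hI : ∀ x ∈ Ignore D A Y L N, x ∉ Z := fun x hx hz => (hZ hz).2 hx
  constructor
  · suffices hs : ∀ v, Conn (H1 D A Y L N).Adj (· ∉ Z) A v →
        Conn (H0 D A Y L).Adj (· ∉ Z) A v from hs Y
    intro v h
    induction h with
    | refl => exact .refl
    | tail _ hbc ih =>
      rename_i b c _
      refine ih.trans ?_
      obtain ⟨hadj, hb, hc⟩ := hbc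
      simp only [H1, SimpleGraph.fromRel_adj] at hadj
      obtain ⟨-, ⟨_, _, ⟨p, hp, hx⟩ | h | h⟩ | ⟨_, _, ⟨p, hp, hx⟩ | h | h⟩⟩ := hadj
      · exact conn_ignore hI hb hc hp hx
      · exact absurd (hLZ h.2) hc
      · exact absurd (hLZ h.2) hc
      · exact (conn_ignore hI hc hb hp hx).symm
      · exact absurd (hLZ h.2) hb
      · exact absurd (hLZ h.2) hb
  · intro h
    have AI : A ∉ Ignore D A Y L N := fun h => h.1.2 (by simp)
    have YI : Y ∉ Ignore D A Y L N := fun h => h.1.2 (by simp)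
    have key : ∀ v, Conn (H0 D A Y L).Adj (· ∉ Z) A v →
        ∃ h ∈ H1verts D A Y L N, h ∉ Z ∧ Conn (H1 D A Y L N).Adj (· ∉ Z) A h ∧
          ReflTransGen (fun a b => (H0 D A Y L).Adj a b ∧ b ∈ Ignore D A Y L N) h v := by
      intro v hv
      induction hv with
      | refl => exact ⟨A, ⟨A_mem, AI⟩, hA, .refl, .refl⟩
      | tail _ hbc ih =>
        rename_i b c _
        obtain ⟨h, h1, h2, h3, h4⟩ := ih
        obtain ⟨hadj, hb, hc⟩ := hbc
        by_cases hcI : c ∈ Ignore D A Y L N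
        · exact ⟨h, h1, h2, h3, h4.tail ⟨hadj, hcI⟩⟩
        · have hcA : c ∈ H1verts D A Y L N := ⟨(moral_adj.1 hadj).2.2.1, hcI⟩
          refine ⟨c, hcA, hc, ?_, .refl⟩
          by_cases e : h = c
          · rw [← e]; exact h3
          · refine h3.tail ⟨?_, h2, hc⟩
            simp only [H1, SimpleGraph.fromRel_adj]
            refine ⟨e, Or.inl ⟨h1, hcA, Or.inl ?_⟩⟩
            have : ∀ x, ReflTransGen (fun a b => (H0 D A Y L).Adj a b ∧ b ∈ Ignore D A Y L N) h x →
                ReflTransGen (fun a b => (H0 D A Y L).Adj a b ∧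
                  (a = h ∨ a = c ∨ a ∈ Ignore D A Y L N)) h x ∧ (x = h ∨ x ∈ Ignore D A Y L N) := by
              intro x hx
              induction hx with
              | refl => exact ⟨.refl, Or.inl rfl⟩
              | tail _ hyz ih2 =>
                refine ⟨ih2.1.tail ⟨hyz.1, ?_⟩, Or.inr hyz.2⟩
                rcases ih2.2 with h | h
                · exact Or.inl h
                · exact Or.inr (Or.inr h)
            obtain ⟨hh, hb'⟩ := this b h4
            obtain ⟨p, hp, hx⟩ := path_of_rtg (H0 D A Y L).Adj
              (fun a => a = h ∨ a = c ∨ a ∈ Ignore D A Y L N) (u := h) (v := c) (by simp)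
              (hh.tail ⟨hadj, by tauto⟩)
            exact ⟨p, hp, fun x hxp n1 n2 => by
              have := hx x hxp
              tauto⟩
    obtain ⟨h, h1, h2, h3, h4⟩ := key Y h
    rcases ReflTransGen.cases_tail h4 with e | ⟨b, _, hb⟩
    · exact e ▸ h3
    · exact absurd hb.2 YI

theorem L_verts (hAY : A ≠ Y) (hLnd : L ∩ desc D {A} = ∅)
    (hN : {A, Y} ∪ L ⊆ N) : L ⊆ H1verts D A Y L N := by
  intro x hx
  refine ⟨L_sub hx, ?_⟩
  rintro ⟨-, h | h⟩
  · exact h.2 (hN (Or.inr hx))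
  · have : x ∈ desc D {A} := by
      rcases h with ⟨c, hc, hcx⟩ | h
      · exact ⟨A, rfl, hc.2.1.trans hcx⟩
      · exact ⟨A, rfl, by rw [h]⟩
    exact (Set.eq_empty_iff_forall_notMem.1 hLnd x) ⟨hx, this⟩

theorem gac_iff_cut (hD : Acyclic D) (hAY : A ≠ Y) (hAancY : ReflTransGen D A Y)
    (hLnd : L ∩ desc D {A} = ∅) (hLY : Y ∉ L) (hN : {A, Y} ∪ L ⊆ N)
    {Z : Set V} (hZ : Z ⊆ ancAYL D A Y L) :
    GAC D A Y L N Z ↔ IsCut (H1verts D A Y L N) (H1 D A Y L N) A Y Z := by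
  have hLv := L_verts (N := N) (Y := Y) hAY hLnd hN
  have AI : A ∉ Ignore D A Y L N := fun h => h.1.2 (by simp)
  have YI : Y ∉ Ignore D A Y L N := fun h => h.1.2 (by simp)
  have hAL : A ∉ L := fun h => (Set.eq_empty_iff_forall_notMem.1 hLnd A) ⟨h, A, rfl, .refl⟩
  rw [cut_iff]
  have main : L ⊆ Z → Z ⊆ H1verts D A Y L N → A ∉ Z → Y ∉ Z →
      (DSep (pbd D A Y) {A} {Y} Z ↔ ¬ Conn (H1 D A Y L N).Adj (· ∉ Z) A Y) := by
    intro h1 h2 h3 h4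
    rw [H1_conn_iff h2 h3 h1]
    refine dsep_iff_moral (pbd_acyclic hD) hZ A_mem Y_mem h3 h4 an_closed ?_
    intro x hx
    obtain ⟨t, ht, h⟩ := an_pbd x hx
    refine ⟨t, ?_, h⟩
    rcases ht with h | h | h
    · exact Or.inl h
    · exact Or.inr (Or.inl h)
    · exact Or.inr (Or.inr (h1 h))
  constructor
  · rintro ⟨h1, h2, h3, h4⟩
    rw [Set.eq_empty_iff_forall_notMem] at h2
    have hA : A ∉ Z := fun h => h2 A ⟨h, A_forb⟩
    have hY : Y ∉ Z := fun h => h2 Y ⟨h, Y_forb hAY hAancY⟩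
    have hv : Z ⊆ H1verts D A Y L N := by
      intro x hx
      refine ⟨hZ hx, ?_⟩
      rintro ⟨-, h | h⟩
      · exact h.2 (h4 hx)
      · exact h2 x ⟨hx, h⟩
    exact ⟨hv, hA, hY, (main h3 hv hA hY).1 h1⟩
  · rintro ⟨hv, hA, hY, hc⟩
    have hL : L ⊆ Z := by
      intro l hl
      by_contra hlZ
      have hAl : A ≠ l := fun e => hAL (e ▸ hl)
      have hYl : Y ≠ l := fun e => hLY (e ▸ hl)
      have e1 : (H1 D A Y L N).Adj A l := by
        simp only [H1, SimpleGraph.fromRel_adj]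
        exact ⟨hAl, Or.inl ⟨⟨A_mem, AI⟩, hLv hl, by tauto⟩⟩
      have e2 : (H1 D A Y L N).Adj Y l := by
        simp only [H1, SimpleGraph.fromRel_adj]
        exact ⟨hYl, Or.inl ⟨⟨Y_mem, YI⟩, hLv hl, by tauto⟩⟩
      exact hc (.head ⟨e1, hA, hlZ⟩ (.single ⟨e2.symm, hlZ, hY⟩))
    have hmem : ∀ x ∈ Z, x ∈ N ∧ x ∉ forb D A Y := by
      intro x hx
      have h1 : x ∈ ancAYL D A Y L \ {A, Y} := by
        refine ⟨hZ hx, ?_⟩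
        rintro (rfl | rfl)
        · exact hA hx
        · exact hY hx
      have h2 := (hv hx).2
      constructor
      · by_contra h; exact h2 ⟨h1, Or.inl ⟨trivial, h⟩⟩
      · intro h; exact h2 ⟨h1, Or.inr h⟩
    refine ⟨(main hL hv hA hY).2 hc, ?_, hL, fun x hx => (hmem x hx).1⟩
    rw [Set.eq_empty_iff_forall_notMem]
    exact fun x hx => (hmem x hx.1).2 hx.2

end spec

end helpers

/-- Proposition 6 (statement 10): if `(L, N)` is admissible and `Z₁, Z₂` are minimal
(respectively minimum) sets satisfying the graphical adjustment criterion, then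
`Z₁ ∧ Z₂ = ∂_{H¹}(cc(Z₁ ∪ Z₂, Y, H¹))` is also minimal (respectively minimum);
moreover `Z₁ ∧ Z₂ ⊆ Z₁ ∪ Z₂`, `Z₁ ∧ Z₂ ⊴_{H¹} Z₁` and `Z₁ ∧ Z₂ ⊴_{H¹} Z₂`. -/
theorem stmt10 {V : Type*} [Fintype V] [DecidableEq V]
    (D : V → V → Prop) (hacy : Acyclic D)
    (A Y : V) (L N : Set V)
    (hAY : A ≠ Y) (hAancY : Relation.ReflTransGen D A Y)
    (hLnd : L ∩ desc D {A} = ∅) (hLY : Y ∉ L)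
    (hN : {A, Y} ∪ L ⊆ N)
    (hadm : Admissible D A Y L N) :
    (∀ Z₁ Z₂, MinimalGAC D A Y L N Z₁ → MinimalGAC D A Y L N Z₂ →
      MinimalGAC D A Y L N
          (bdry (H1 D A Y L N) (cc (H1 D A Y L N) (Z₁ ∪ Z₂) Y)) ∧
        bdry (H1 D A Y L N) (cc (H1 D A Y L N) (Z₁ ∪ Z₂) Y) ⊆ Z₁ ∪ Z₂ ∧
        TLE (H1 D A Y L N) A Y
          (bdry (H1 D A Y L N) (cc (H1 D A Y L N) (Z₁ ∪ Z₂) Y)) Z₁ ∧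
        TLE (H1 D A Y L N) A Y
          (bdry (H1 D A Y L N) (cc (H1 D A Y L N) (Z₁ ∪ Z₂) Y)) Z₂) ∧
    (∀ Z₁ Z₂, MinimumGAC D A Y L N Z₁ → MinimumGAC D A Y L N Z₂ →
      MinimumGAC D A Y L N
          (bdry (H1 D A Y L N) (cc (H1 D A Y L N) (Z₁ ∪ Z₂) Y)) ∧
        bdry (H1 D A Y L N) (cc (H1 D A Y L N) (Z₁ ∪ Z₂) Y) ⊆ Z₁ ∪ Z₂ ∧
        TLE (H1 D A Y L N) A Y
          (bdry (H1 D A Y L N) (cc (H1 D A Y L N) (Z₁ ∪ Z₂) Y)) Z₁ ∧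
        TLE (H1 D A Y L N) A Y
          (bdry (H1 D A Y L N) (cc (H1 D A Y L N) (Z₁ ∪ Z₂) Y)) Z₂) := by
  have hiff : ∀ Z, Z ⊆ ancAYL D A Y L →
      (GAC D A Y L N Z ↔ IsCut (H1verts D A Y L N) (H1 D A Y L N) A Y Z) :=
    fun Z hZ => gac_iff_cut hacy hAY hAancY hLnd hLY hN hZ
  have hcutan : ∀ Z, IsCut (H1verts D A Y L N) (H1 D A Y L N) A Y Z → Z ⊆ ancAYL D A Y L :=
    fun Z h x hx => (h.1 hx).1
  have minl : ∀ Z, MinimalGAC D A Y L N Z ↔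
      MinimalCut (H1verts D A Y L N) (H1 D A Y L N) A Y Z := by
    intro Z
    constructor
    · rintro ⟨h1, h2⟩
      have hZ : Z ⊆ ancAYL D A Y L := by
        by_contra hZ
        refine h2 (Z ∩ ancAYL D A Y L) ⟨Set.inter_subset_left, fun h => hZ ?_⟩ (gac_inter hacy h1)
        exact fun x hx => (h hx).2
      exact ⟨(hiff Z hZ).1 h1, fun Z' hZ' hc => h2 Z' hZ' ((hiff Z' (hZ'.1.trans hZ)).2 hc)⟩
    · rintro ⟨h1, h2⟩
      have hZ := hcutan Z h1
      exact ⟨(hiff Z hZ).2 h1, fun Z' hZ' hc => h2 Z' hZ' ((hiff Z' (hZ'.1.trans hZ)).1 hc)⟩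
  have minm : ∀ Z, MinimumGAC D A Y L N Z ↔
      MinimumCut (H1verts D A Y L N) (H1 D A Y L N) A Y Z := by
    intro Z
    constructor
    · rintro ⟨h1, h2⟩
      have hZ : Z ⊆ ancAYL D A Y L := by
        by_contra hZ
        have hs : Z ∩ ancAYL D A Y L ⊂ Z :=
          ⟨Set.inter_subset_left, fun h => hZ fun x hx => (h hx).2⟩
        have := h2 _ (gac_inter hacy h1)
        have := Set.ncard_lt_ncard hs (Set.toFinite _)
        omega
      exact ⟨(hiff Z hZ).1 h1, fun Z' hc => h2 Z' ((hiff Z' (hcutan Z' hc)).2 hc)⟩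
    · rintro ⟨h1, h2⟩
      refine ⟨(hiff Z (hcutan Z h1)).2 h1, fun Z' hc => ?_⟩
      have := h2 _ ((hiff _ Set.inter_subset_right).1 (gac_inter hacy hc))
      exact this.trans (Set.ncard_le_ncard Set.inter_subset_left (Set.toFinite _))
  have rest : ∀ Z₁ Z₂, IsCut (H1verts D A Y L N) (H1 D A Y L N) A Y Z₁ →
      IsCut (H1verts D A Y L N) (H1 D A Y L N) A Y Z₂ →
      bdry (H1 D A Y L N) (cc (H1 D A Y L N) (Z₁ ∪ Z₂) Y) ⊆ Z₁ ∪ Z₂ ∧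
        TLE (H1 D A Y L N) A Y
          (bdry (H1 D A Y L N) (cc (H1 D A Y L N) (Z₁ ∪ Z₂) Y)) Z₁ ∧
        TLE (H1 D A Y L N) A Y
          (bdry (H1 D A Y L N) (cc (H1 D A Y L N) (Z₁ ∪ Z₂) Y)) Z₂ := by
    intro Z₁ Z₂ h1 h2
    have hY : Y ∉ Z₁ ∪ Z₂ := by
      rintro (h | h)
      · exact ((cut_iff _ _ _ _ _).1 h1).2.2.1 h
      · exact ((cut_iff _ _ _ _ _).1 h2).2.2.1 h
    exact ⟨bdry_sub _ _ _, bdry_tle Set.subset_union_left h1 hY,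
      bdry_tle Set.subset_union_right h2 hY⟩
  constructor
  · intro Z₁ Z₂ h1 h2
    rw [minl] at h1 h2
    exact ⟨(minl _).2 (bdry_minimal h1 h2), rest _ _ h1.1 h2.1⟩
  · intro Z₁ Z₂ h1 h2
    rw [minm] at h1 h2
    exact ⟨(minm _).2 (bdry_minimum h1 h2), rest _ _ h1.1 h2.1⟩

end CausalGraph
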